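/- Let 𝔞 be a cofinite monomial ideal in k[x₁,…,x_d] and let c > 0 be a real number. Then there exists ε₀ > 0 such that for every ε with 0 < ε < ε₀ one has {v ∈ ℕ^d : v + 𝟏 ∈ int((c−ε)•P(𝔞))} = {v ∈ ℕ^d : v + 𝟏 ∈ c•P(𝔞)}. (The stabilization of the multiplier ideals I(𝔞^{c−ε}) for small ε > 0 at the span of the monomials with v + 𝟏 in the closed dilated Newton polyhedron, underlying the definition of the multiplicity m(c) and Lemma 5.3.) -/

import Mathlib

open Set Filter Pointwise MeasureTheory

/-- The map sending a vector of natural number exponents to the corresponding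
real vector. -/
noncomputable def expToReal (d : ℕ) (v : Fin d → ℕ) : Fin d → ℝ := fun i => (v i : ℝ)

/-- The Newton polyhedron of a monomial ideal with exponent set `S`:
the convex hull in `ℝ^d` of the exponent vectors. -/
noncomputable def newtonPoly (d : ℕ) (S : Set (Fin d → ℕ)) : Set (Fin d → ℝ) :=
  convexHull ℝ (expToReal d '' S)

/-- The multiplicity `m(c)` of `c > 0` as a (candidate) jumping number of the monomial
ideal with exponent set `S`: the number of `v ∈ ℕ^d` with `v + 𝟏` on the boundary part
`c•P(𝔞) \ int(c•P(𝔞))` of the dilated Newton polyhedron. -/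
noncomputable def multJump (d : ℕ) (S : Set (Fin d → ℕ)) (c : ℝ) : ℕ :=
  Nat.card {v : Fin d → ℕ |
    expToReal d v + 1 ∈ c • newtonPoly d S \ interior (c • newtonPoly d S)}

/-!
By Dickson's lemma the Newton polyhedron is `P = K + ℝ≥0^d` with `K` the convex hull of finitely
many exponents, a compact set. For an integral point `z` and `b > 0`, `z ∈ b • P` means that
`⌈b * qᵢ⌉ ≤ zᵢ` for all `i`, for some `q ∈ K`. Rounding up is lower semicontinuous, so compactness
of `K` yields, for every `b` near `c` and uniformly in `q ∈ K`, some `p ∈ K` with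
`⌈c * pᵢ⌉ ≤ ⌈b * qᵢ⌉`: the integral points of `b • P` already lie in `c • P`. Conversely, for
`b < c`, a point of `c • P` with positive coordinates strictly dominates a point of `b • P`, hence
is interior to `b • P`.
-/

section Order

theorem exists_finite_upperClosure_eq {α : Type*} [PartialOrder α] [WellQuasiOrderedLE α]
    {S : Set α} (hS : IsUpperSet S) : ∃ F : Set α, F.Finite ∧ (upperClosure F : Set α) = S := by
  refine ⟨{a | Minimal (· ∈ S) a},
    WellQuasiOrderedLE.finite_of_isAntichain (setOfPred_minimal_antichain _), Subset.antisymm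
      (upperClosure_min (fun _ ha => ha.prop) hS) fun s hs => ?_⟩
  obtain ⟨a, has, ha⟩ := exists_minimal_le_of_wellFoundedLT (· ∈ S) s hs
  exact mem_upperClosure.2 ⟨a, ha, has⟩

theorem add_Ici_zero_eq_upperClosure {G : Type*} [AddCommGroup G] [PartialOrder G]
    [IsOrderedAddMonoid G] (s : Set G) : s + Ici 0 = (upperClosure s : Set G) := by
  rw [← UpperSet.coe_Ici, ← upperClosure_singleton, add_upperClosure, singleton_zero, add_zero]

theorem smul_upperClosure_of_pos {𝕜 E : Type*} [GroupWithZero 𝕜] [Preorder 𝕜] [Preorder E]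
    [MulAction 𝕜 E] [PosSMulMono 𝕜 E] [PosSMulReflectLE 𝕜 E] {c : 𝕜} (hc : 0 < c) (s : Set E) :
    c • (upperClosure s : Set E) = upperClosure (c • s) :=
  congrArg SetLike.coe (upperClosure_image (s := s) (OrderIso.smulRight (β := E) hc)).symm

end Order

section Topology

open scoped Topology

variable {ι R X Y : Type*} [Finite ι] [Ring R] [LinearOrder R] [FloorRing R]
  [TopologicalSpace R] [OrderTopology R] [TopologicalSpace X] [TopologicalSpace Y]

theorem eventually_ceil_le_ceil (x : R) : ∀ᶠ y in 𝓝 x, ⌈x⌉ ≤ ⌈y⌉ :=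
  (eventually_gt_nhds (Int.le_ceil_iff.1 le_rfl)).mono fun _ => Int.le_ceil_iff.2

theorem eventually_forall_exists_ceil_le_ceil {K : Set Y} (hK : IsCompact K) {f : X → Y → ι → R}
    (hf : Continuous f.uncurry) (x₀ : X) :
    ∀ᶠ x in 𝓝 x₀, ∀ q ∈ K, ∃ p ∈ K, ∀ i, ⌈f x₀ p i⌉ ≤ ⌈f x q i⌉ := by
  refine hK.eventually_forall_of_forall_eventually fun p hp => ?_
  have hceil_near : ∀ᶠ xq in 𝓝 (x₀, p), ∀ i, ⌈f x₀ p i⌉ ≤ ⌈f.uncurry xq i⌉ :=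
    eventually_all.2 fun i =>
      ((continuous_apply i).comp hf).continuousAt.eventually (eventually_ceil_le_ceil _)
  exact hceil_near.mono fun _ hle => ⟨p, hp, hle⟩

theorem eventually_forall_intCast_mem_upperClosure_image {K : Set Y} (hK : IsCompact K)
    {f : X → Y → ι → R} (hf : Continuous f.uncurry) (x₀ : X) :
    ∀ᶠ x in 𝓝 x₀, ∀ z : ι → ℤ,
      (fun i => (z i : R)) ∈ upperClosure (f x '' K) →
        (fun i => (z i : R)) ∈ upperClosure (f x₀ '' K) := by
  filter_upwards [eventually_forall_exists_ceil_le_ceil hK hf x₀] with x hceil z hz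
  obtain ⟨_, ⟨q, hq, rfl⟩, hqz⟩ := mem_upperClosure.1 hz
  obtain ⟨p, hp, hpq⟩ := hceil q hq
  refine mem_upperClosure.2 ⟨f x₀ p, mem_image_of_mem _ hp, fun i => Int.ceil_le.1 ?_⟩
  exact (hpq i).trans (Int.ceil_le.2 (hqz i))

theorem mem_interior_smul_of_mem_smul_of_lt {U : Set (ι → ℝ)} (hU : IsUpperSet U) {b c : ℝ}
    (hb : 0 < b) (hbc : b < c) {x : ι → ℝ} (hx : ∀ i, 0 < x i) (hxU : x ∈ c • U) :
    x ∈ interior (b • U) := by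
  obtain ⟨u, hu, rfl⟩ := hxU
  have hbU : IsUpperSet (b • U) := hU.image (OrderIso.smulRight (β := ι → ℝ) hb)
  refine hbU.mem_interior_of_forall_lt (subset_closure (smul_mem_smul_set hu)) fun i => ?_
  have hui : 0 < u i := pos_of_mul_pos_right (hx i) (hb.trans hbc).le
  exact mul_lt_mul_of_pos_right hbc hui

end Topology

section NewtonPolyhedron

open scoped Topology

variable {d : ℕ}

theorem convexHull_range_natCast {𝕜 : Type*} [Field 𝕜] [LinearOrder 𝕜] [IsStrictOrderedRing 𝕜]
    [Archimedean 𝕜] : convexHull 𝕜 (range (Nat.cast : ℕ → 𝕜)) = Ici 0 := by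
  refine Subset.antisymm (convexHull_min ?_ (convex_Ici 0)) fun t ht => ?_
  · exact range_subset_iff.2 fun n => mem_Ici.2 n.cast_nonneg
  · obtain ⟨n, hn⟩ := exists_nat_ge t
    refine segment_subset_convexHull (mem_range_self 0) (mem_range_self n) ?_
    rw [Nat.cast_zero, segment_eq_Icc n.cast_nonneg]
    exact ⟨ht, hn⟩

theorem expToReal_add (v w : Fin d → ℕ) : expToReal d (v + w) = expToReal d v + expToReal d w :=
  funext fun i => Nat.cast_add (v i) (w i)

theorem convexHull_range_expToReal : convexHull ℝ (range (expToReal d)) = Ici 0 := by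
  have hrange : range (expToReal d) = univ.pi fun _ => range (Nat.cast : ℕ → ℝ) :=
    range_piMap fun _ => Nat.cast
  simp_rw [hrange, convexHull_pi, convexHull_range_natCast]
  exact pi_univ_Ici 0

theorem image_expToReal_upperClosure (G : Set (Fin d → ℕ)) :
    expToReal d '' upperClosure G = expToReal d '' G + range (expToReal d) := by
  ext x
  constructor
  · rintro ⟨v, ⟨g, hg, hgv⟩, rfl⟩
    rw [← add_tsub_cancel_of_le hgv, expToReal_add]
    exact add_mem_add (mem_image_of_mem _ hg) (mem_range_self _)
  · rintro ⟨_, ⟨g, hg, rfl⟩, _, ⟨w, rfl⟩, rfl⟩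
    exact ⟨g + w, mem_upperClosure.2 ⟨g, hg, le_self_add⟩, expToReal_add g w⟩

theorem newtonPoly_upperClosure (G : Set (Fin d → ℕ)) :
    newtonPoly d (upperClosure G) = upperClosure (newtonPoly d G) := by
  rw [newtonPoly, image_expToReal_upperClosure, convexHull_add, convexHull_range_expToReal,
    add_Ici_zero_eq_upperClosure, newtonPoly]

theorem isCompact_newtonPoly {F : Set (Fin d → ℕ)} (hF : F.Finite) :
    IsCompact (newtonPoly d F) :=
  (hF.image _).isCompact_convexHull ℝ

theorem multiplier_ideal_stabilizes_below_general {S : Set (Fin d → ℕ)} (hS : IsUpperSet S)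
    {c : ℝ} (hc : 0 < c) :
    ∃ ε₀ > 0, ∀ ε : ℝ, 0 < ε → ε < ε₀ →
      {v : Fin d → ℕ | expToReal d v + 1 ∈ interior ((c - ε) • newtonPoly d S)} =
        {v : Fin d → ℕ | expToReal d v + 1 ∈ c • newtonPoly d S} := by
  obtain ⟨F, hF, rfl⟩ := exists_finite_upperClosure_eq hS
  rw [newtonPoly_upperClosure]
  suffices hev : ∀ᶠ b in 𝓝[<] c,
      {v | expToReal d v + 1 ∈ interior (b • (upperClosure (newtonPoly d F) : Set _))} =
        {v | expToReal d v + 1 ∈ c • (upperClosure (newtonPoly d F) : Set _)} by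
    obtain ⟨a, hac, ha⟩ := mem_nhdsLT_iff_exists_Ioo_subset.1 hev
    exact ⟨c - a, sub_pos.2 hac, fun ε hε hεa => ha ⟨by linarith, by linarith⟩⟩
  have hlattice := eventually_forall_intCast_mem_upperClosure_image (isCompact_newtonPoly hF)
    (f := fun (b : ℝ) p => b • p) continuous_smul c
  filter_upwards [nhdsWithin_le_nhds hlattice, Ioo_mem_nhdsLT hc] with b hb ⟨hb₀, hbc⟩
  ext v
  refine ⟨fun hv => ?_, fun hv => mem_interior_smul_of_mem_smul_of_lt (upperClosure _).upper
    hb₀ hbc (fun i => Nat.cast_add_one_pos (v i)) hv⟩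
  have hcast : expToReal d v + 1 = fun i => ((v i + 1 : ℤ) : ℝ) := by
    ext i
    simp [expToReal]
  rw [mem_ofPred_eq, hcast] at hv ⊢
  have hvb := interior_subset hv
  rw [smul_upperClosure_of_pos hb₀] at hvb
  rw [smul_upperClosure_of_pos hc]
  exact hb _ hvb

end NewtonPolyhedron

/-- Stabilization of the multiplier ideals `I(𝔞^{c-ε})` for small `ε > 0` (underlying the
definition of the multiplicity `m(c)` and Lemma 5.3): for a cofinite monomial ideal and
`c > 0`, for all sufficiently small `ε > 0` the set of `v` with `v + 𝟏 ∈ int((c-ε)•P(𝔞))`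
equals the set of `v` with `v + 𝟏` in the closed polyhedron `c•P(𝔞)`. -/
theorem multiplier_ideal_stabilizes_below (d : ℕ) (hd : 1 ≤ d) (k : Type*) [Field k]
    (S : Set (Fin d → ℕ)) (hS : ∀ v ∈ S, ∀ w : Fin d → ℕ, v + w ∈ S)
    (hcof : (Sᶜ : Set (Fin d → ℕ)).Finite)
    (c : ℝ) (hc : 0 < c) :
    ∃ ε₀ > 0, ∀ ε : ℝ, 0 < ε → ε < ε₀ →
      {v : Fin d → ℕ | expToReal d v + 1 ∈ interior ((c - ε) • newtonPoly d S)} =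
        {v : Fin d → ℕ | expToReal d v + 1 ∈ c • newtonPoly d S} :=
  multiplier_ideal_stabilizes_below_general
    (fun v w hvw hv => add_tsub_cancel_of_le hvw ▸ hS v hv (w - v)) hc
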